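/- The unconstrained wrapping length satisfies W(L) = min over 0 ≤ i < n of max(y_i, x_n − x_i). In particular W(L) ≤ y_n. -/

import Mathlib

/-- `pSum L i` is `x_i`: the sum of the first `i` elements of `L` (so `pSum L 0 = 0`). -/
def pSum (L : List ℝ) (i : ℕ) : ℝ := (L.take i).sum

/-- A valid partition of `L`: a partition of `L` into nonempty consecutive blocks
whose totals are non-decreasing from left to right. -/
def ValidPartition (L : List ℝ) (P : List (List ℝ)) : Prop :=
  P.flatten = L ∧ (∀ B ∈ P, B ≠ []) ∧ List.Chain' (· ≤ ·) (P.map List.sum)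

/-- The total of the last block of a partition (`0` for the empty partition). -/
def lastTotal (P : List (List ℝ)) : ℝ := (P.map List.sum).getLastD 0

/-- `wrapLen L` is the wrapping length `y_{|L|}`: the minimum, over all valid
partitions of `L`, of the total of the last block (with `wrapLen [] = 0`,
realized by the empty partition). -/
noncomputable def wrapLen (L : List ℝ) : ℝ :=
  sInf {t | ∃ P, ValidPartition L P ∧ lastTotal P = t}

/-- The unconstrained wrapping length `W(L)`: the minimum, over all partitions of
`L` into nonempty consecutive blocks `B_1, …, B_k` (`k ≥ 1`) whose totals satisfy
`t_1 ≤ ⋯ ≤ t_{k−1}` (the last total `t_k` unconstrained), of `max (t_{k−1}, t_k)`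
(interpreted as `t_1` when `k = 1`; here `t_0` is read as `0`, which for positive
lengths gives `max (0, t_1) = t_1`). -/
noncomputable def uWrap (L : List ℝ) : ℝ :=
  sInf {c | ∃ P : List (List ℝ), P ≠ [] ∧ P.flatten = L ∧ (∀ B ∈ P, B ≠ []) ∧
    List.Chain' (· ≤ ·) ((P.map List.sum).dropLast) ∧
    c = max ((P.map List.sum).dropLast.getLastD 0) (lastTotal P)}

/-!
Removing the last block `B` from a partition admissible for `W(L)` leaves a valid partition of a
proper prefix of `L`, and every valid partition of a proper prefix arises this way. So for a fixed
cut point `i` the last total is `x_n − x_i`, and the best choice of the other blocks realizes `y_i`.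
For `W(L) ≤ y_n`, cut off the last block of a valid partition realizing `y_n`: its total is at
least the total of the preceding block.
-/

section LastBlock

variable {L B : List ℝ} {Q : List (List ℝ)}

theorem lastTotal_append_singleton (Q : List (List ℝ)) (B : List ℝ) :
    lastTotal (Q ++ [B]) = B.sum := by
  simp [lastTotal, List.getLastD_eq_getLast?]

theorem exists_suffix_sum_eq_lastTotal (P : List (List ℝ)) :
    ∃ S, S <:+ P.flatten ∧ S.sum = lastTotal P := by
  rcases List.eq_nil_or_concat' P with rfl | ⟨Q, B, rfl⟩
  · exact ⟨[], List.nil_suffix, by simp [lastTotal]⟩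
  · exact ⟨B, by simp, (lastTotal_append_singleton Q B).symm⟩

theorem finite_setOf_lastTotal (L : List ℝ) :
    {t | ∃ P : List (List ℝ), P.flatten = L ∧ lastTotal P = t}.Finite := by
  refine (L.tails.finite_toSet.image List.sum).subset ?_
  rintro _ ⟨P, rfl, rfl⟩
  obtain ⟨S, hS, hsum⟩ := exists_suffix_sum_eq_lastTotal P
  exact ⟨S, (List.mem_tails _ _).2 hS, hsum⟩

theorem ValidPartition.dropLast (h : ValidPartition L (Q ++ [B])) :
    ValidPartition Q.flatten Q := by
  obtain ⟨-, hne, hchain⟩ := h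
  rw [List.map_append] at hchain
  exact ⟨rfl, fun C hC => hne C (List.mem_append_left _ hC), (List.isChain_append.1 hchain).1⟩

theorem ValidPartition.lastTotal_le_sum (h : ValidPartition L (Q ++ [B])) (hQ : Q ≠ []) :
    lastTotal Q ≤ B.sum := by
  obtain ⟨R, C, rfl⟩ := (List.eq_nil_or_concat' Q).resolve_left hQ
  obtain ⟨-, -, hchain⟩ := h
  rw [lastTotal_append_singleton]
  rw [List.map_append] at hchain
  exact (List.isChain_append.1 hchain).2.2 C.sum (by simp) B.sum (by simp)

end LastBlock

section WrapLen

variable {L : List ℝ} {P : List (List ℝ)}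

theorem exists_validPartition (L : List ℝ) : ∃ P, ValidPartition L P := by
  by_cases hL : L = []
  · exact ⟨[], hL.symm, by simp, List.isChain_nil⟩
  · exact ⟨[L], by simp, by simpa using hL, List.isChain_singleton _⟩

theorem finite_setOf_lastTotal_validPartition (L : List ℝ) :
    {t | ∃ P, ValidPartition L P ∧ lastTotal P = t}.Finite :=
  (finite_setOf_lastTotal L).subset fun _ ⟨P, hP, ht⟩ => ⟨P, hP.1, ht⟩

theorem wrapLen_le_lastTotal (hP : ValidPartition L P) : wrapLen L ≤ lastTotal P :=
  csInf_le (finite_setOf_lastTotal_validPartition L).bddBelow ⟨P, hP, rfl⟩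

theorem exists_validPartition_lastTotal_eq_wrapLen (L : List ℝ) :
    ∃ P, ValidPartition L P ∧ lastTotal P = wrapLen L := by
  obtain ⟨P, hP⟩ := exists_validPartition L
  have hne : {t | ∃ P, ValidPartition L P ∧ lastTotal P = t}.Nonempty := ⟨_, P, hP, rfl⟩
  exact hne.csInf_mem (finite_setOf_lastTotal_validPartition L)

end WrapLen

section UWrap

variable {L A B : List ℝ} {Q : List (List ℝ)}

theorem uWrap_eq_sInf_append (L : List ℝ) :
    uWrap L = sInf {c | ∃ Q B, ValidPartition Q.flatten Q ∧ B ≠ [] ∧ Q.flatten ++ B = L ∧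
      c = max (lastTotal Q) B.sum} := by
  unfold uWrap
  congr 1
  ext c
  constructor
  · rintro ⟨P, hP, hflat, hne, hchain, rfl⟩
    obtain ⟨Q, B, rfl⟩ := (List.eq_nil_or_concat' P).resolve_left hP
    refine ⟨Q, B, ⟨rfl, fun C hC => hne C (List.mem_append_left _ hC), by simpa using hchain⟩,
      hne B (by simp), by simpa using hflat, ?_⟩
    rw [lastTotal_append_singleton]
    simp [lastTotal]
  · rintro ⟨Q, B, ⟨-, hne, hchain⟩, hB, hflat, rfl⟩
    refine ⟨Q ++ [B], by simp, by simpa using hflat, ?_, by simpa using hchain, ?_⟩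
    · simpa [or_imp, forall_and, hB] using hne
    · rw [lastTotal_append_singleton]
      simp [lastTotal]

theorem uWrap_append_le_max_lastTotal (hQ : ValidPartition A Q) (hB : B ≠ []) :
    uWrap (A ++ B) ≤ max (lastTotal Q) B.sum := by
  obtain ⟨rfl, hQ⟩ := hQ
  rw [uWrap_eq_sInf_append]
  refine csInf_le ?_ ⟨Q, B, ⟨rfl, hQ⟩, hB, rfl, rfl⟩
  obtain ⟨m, hm⟩ := (finite_setOf_lastTotal (Q.flatten ++ B)).bddBelow
  refine ⟨m, ?_⟩
  rintro _ ⟨R, C, -, -, hflat, rfl⟩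
  have hmC : m ≤ C.sum := hm ⟨R ++ [C], by simpa using hflat, lastTotal_append_singleton R C⟩
  exact le_max_of_le_right hmC

theorem uWrap_append_le (A : List ℝ) (hB : B ≠ []) :
    uWrap (A ++ B) ≤ max (wrapLen A) B.sum := by
  obtain ⟨Q, hQ, hlast⟩ := exists_validPartition_lastTotal_eq_wrapLen A
  exact hlast ▸ uWrap_append_le_max_lastTotal hQ hB

theorem le_uWrap {a : ℝ} (hL : L ≠ [])
    (h : ∀ A B, A ++ B = L → B ≠ [] → a ≤ max (wrapLen A) B.sum) : a ≤ uWrap L := by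
  rw [uWrap_eq_sInf_append]
  refine le_csInf ⟨_, [], L, ⟨rfl, by simp, List.isChain_nil⟩, hL, rfl, rfl⟩ ?_
  rintro _ ⟨Q, B, hQ, hB, hflat, rfl⟩
  calc a ≤ max (wrapLen Q.flatten) B.sum := h _ _ hflat hB
    _ ≤ max (lastTotal Q) B.sum := max_le_max_right _ (wrapLen_le_lastTotal hQ)

theorem sum_sub_pSum (L : List ℝ) (i : ℕ) : L.sum - pSum L i = (L.drop i).sum :=
  sub_eq_of_eq_add' (L.sum_take_add_sum_drop i).symm

theorem finite_setOf_exists_lt_eq {α : Type*} (f : ℕ → α) (n : ℕ) :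
    {a | ∃ i < n, a = f i}.Finite := by
  refine ((Set.finite_lt_nat n).image f).subset ?_
  rintro _ ⟨i, hi, rfl⟩
  exact ⟨i, hi, rfl⟩

theorem uWrap_eq_sInf_max_wrapLen_take (hL : L ≠ []) :
    uWrap L = sInf {c | ∃ i < L.length, c = max (wrapLen (L.take i)) (L.sum - pSum L i)} := by
  simp only [sum_sub_pSum]
  apply le_antisymm
  · refine le_csInf ⟨_, 0, List.length_pos_iff.2 hL, rfl⟩ ?_
    rintro _ ⟨i, hi, rfl⟩
    have hdrop : L.drop i ≠ [] := by simpa using hi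
    simpa only [List.take_append_drop] using uWrap_append_le (L.take i) hdrop
  · refine le_uWrap hL ?_
    rintro A B rfl hB
    refine csInf_le (finite_setOf_exists_lt_eq _ _).bddBelow ⟨A.length, ?_, by simp⟩
    simpa [List.length_pos_iff] using hB

theorem uWrap_le_wrapLen (hsum : 0 ≤ L.sum) (hL : L ≠ []) : uWrap L ≤ wrapLen L := by
  obtain ⟨P, hP, hlast⟩ := exists_validPartition_lastTotal_eq_wrapLen L
  rcases List.eq_nil_or_concat' P with rfl | ⟨Q, B, rfl⟩
  · exact absurd hP.1.symm hL
  have hflat : Q.flatten ++ B = L := by simpa using hP.1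
  have hB : B ≠ [] := hP.2.1 B (by simp)
  have hQB : lastTotal Q ≤ B.sum := by
    by_cases hQ : Q = []
    · subst hQ
      simpa [lastTotal, ← hflat] using hsum
    · exact hP.lastTotal_le_sum hQ
  calc uWrap L ≤ max (lastTotal Q) B.sum := hflat ▸ uWrap_append_le_max_lastTotal hP.dropLast hB
    _ = B.sum := max_eq_right hQB
    _ = wrapLen L := (lastTotal_append_singleton Q B).symm.trans hlast

end UWrap

theorem stmt_10_general (L : List ℝ) (hsum : 0 ≤ L.sum) (hne : L ≠ []) :
    uWrap L =
      sInf {c | ∃ i < L.length,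
        c = max (wrapLen (L.take i)) (L.sum - pSum L i)} ∧
    uWrap L ≤ wrapLen L :=
  ⟨uWrap_eq_sInf_max_wrapLen_take hne, uWrap_le_wrapLen hsum hne⟩

/-- `W(L) = min over 0 ≤ i < n of max (y_i, x_n − x_i)`.
In particular, `W(L) ≤ y_n`. -/
theorem stmt_10 (L : List ℝ) (hL : ∀ l ∈ L, 0 < l) (hne : L ≠ []) :
    uWrap L =
      sInf {c | ∃ i < L.length,
        c = max (wrapLen (L.take i)) (L.sum - pSum L i)} ∧
    uWrap L ≤ wrapLen L :=
  stmt_10_general L (List.sum_nonneg fun l hl => (hL l hl).le) hne
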